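/- arXiv:1604.00753 — 2 statements merged into one kernel-verified Lean document; each statement's English description precedes it below -/
import Mathlib

section
/- ∫₀¹ x·log Γ(x)·sin(2πx) dx = γ/(4π), where γ is the Euler–Mascheroni constant. -/
open Real
open Filter MeasureTheory Topology

/-!
Write `x = (x - 1/2) + 1/2`. The weight `(x - 1/2) sin (2πx)` is symmetric about `1/2`, so the
reflection formula replaces `log Γ(x)` in the first part by half of `log π - log sin (πx)`, and
the remaining integral is elementary. The second part is half the first of Kummer's Fourier sine
coefficients of `log Γ`. In Euler's product for `Γ`, the logarithms `log (x + m)`, integrated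
against `sin (2πkx)` over `[0, 1]`, tile the integral of `log u * sin (2πku)` over `[0, n + 1]`.
Integration by parts turns this into the cosine integral `Cin` at a multiple of `π`, where `γ`
enters through `Cin (nπ) - log (nπ) → γ`: comparing `1 / t` with `1 / sin t` gives an odd harmonic
sum, with an error that vanishes by Riemann–Lebesgue.
-/

lemma tendsto_integral_cos_mul_mul_atTop {f : ℝ → ℝ} (hf : Integrable f) :
    Tendsto (fun w ↦ ∫ x, cos (w * x) * f x) atTop (𝓝 0) := by
  have hfourier := (Real.tendsto_integral_exp_smul_cocompact fun x ↦ (f x : ℂ)).comp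
    ((tendsto_id.atTop_div_const two_pi_pos).mono_right atTop_le_cocompact)
  have hre := (Complex.continuous_re.tendsto 0).comp hfourier
  rw [Complex.zero_re] at hre
  refine hre.congr fun w ↦ ?_
  have hexp : Integrable fun x ↦ fourierChar (-(x * (w / (2 * π)))) • (f x : ℂ) := by
    simpa [mul_comm] using
      (Real.fourierIntegral_convergent_iff (w / (2 * π))).mpr (hf.ofReal (𝕜 := ℂ))
  refine (integral_re hexp).symm.trans (integral_congr_ae (.of_forall fun x ↦ ?_))
  have harg : 2 * π * -(x * (w / (2 * π))) = -(w * x) := by field_simp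
  simp [Circle.smul_def, Real.fourierChar_apply, harg, Complex.exp_re, -Complex.ofReal_mul]

lemma tendsto_intervalIntegral_cos_mul_mul_atTop {f : ℝ → ℝ} {a b : ℝ}
    (hf : IntervalIntegrable f volume a b) :
    Tendsto (fun w ↦ ∫ x in a..b, cos (w * x) * f x) atTop (𝓝 0) := by
  have hset {s : Set ℝ} (hs : MeasurableSet s) (hfs : IntegrableOn f s) :
      Tendsto (fun w ↦ ∫ x in s, cos (w * x) * f x) atTop (𝓝 0) := by
    refine (tendsto_integral_cos_mul_mul_atTop (hfs.integrable_indicator hs)).congr fun w ↦ ?_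
    rw [← integral_indicator hs]
    simp_rw [Set.indicator_mul_right]
  simpa only [intervalIntegral, sub_zero] using
    (hset measurableSet_Ioc hf.1).sub (hset measurableSet_Ioc hf.2)

lemma sum_sin_odd_mul_mul_sin (n : ℕ) (θ : ℝ) :
    (∑ j ∈ Finset.range n, sin ((2 * j + 1) * θ)) * sin θ = sin (n * θ) ^ 2 := by
  induction n with
  | zero => simp
  | succ n ih =>
    rw [Finset.sum_range_succ, add_mul, ih,
      show (2 * n + 1) * θ = n * θ + (n * θ + θ) by ring,
      show ((n + 1 : ℕ) : ℝ) * θ = n * θ + θ by push_cast; ring]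
    simp only [sin_add, cos_add]
    linear_combination -sin (n * θ) ^ 2 * sin_sq_add_cos_sq θ

lemma one_sub_cos_two_mul_div_sin (n : ℕ) (θ : ℝ) :
    (1 - cos (2 * n * θ)) / sin θ = 2 * ∑ j ∈ Finset.range n, sin ((2 * j + 1) * θ) := by
  by_cases hθ : sin θ = 0
  · obtain ⟨k, rfl⟩ := sin_eq_zero_iff.mp hθ
    have hterm (j : ℕ) : sin ((2 * j + 1) * (k * π)) = 0 := by
      simpa [mul_assoc] using sin_int_mul_pi ((2 * j + 1) * k)
    simp [hθ, hterm]
  · rw [div_eq_iff hθ, mul_assoc 2 (Finset.sum _ _), sum_sin_odd_mul_mul_sin, mul_assoc,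
      cos_two_mul, cos_sq']
    ring

lemma continuous_one_sub_cos_two_mul_div_sin (n : ℕ) :
    Continuous fun θ ↦ (1 - cos (2 * n * θ)) / sin θ := by
  simp_rw [one_sub_cos_two_mul_div_sin]
  fun_prop

lemma integral_one_sub_cos_two_mul_div_sin (n : ℕ) :
    ∫ θ in 0..π / 2, (1 - cos (2 * n * θ)) / sin θ =
      2 * ∑ j ∈ Finset.range n, 1 / (2 * (j : ℝ) + 1) := by
  have hterm (j : ℕ) : ∫ θ in 0..π / 2, sin ((2 * j + 1) * θ) = 1 / (2 * (j : ℝ) + 1) := by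
    have hcos : cos ((2 * j + 1) * (π / 2)) = 0 :=
      cos_eq_zero_iff.mpr ⟨j, by push_cast; ring⟩
    have hodd : 2 * (j : ℝ) + 1 ≠ 0 := by positivity
    rw [intervalIntegral.integral_comp_mul_left _ hodd, integral_sin, hcos]
    simp
  simp_rw [one_sub_cos_two_mul_div_sin]
  rw [intervalIntegral.integral_const_mul, intervalIntegral.integral_finsetSum fun j _ ↦
    Continuous.intervalIntegrable (by fun_prop) _ _]
  simp_rw [hterm]

lemma sum_one_div_odd_eq_harmonic (n : ℕ) :
    ∑ j ∈ Finset.range n, 1 / (2 * (j : ℝ) + 1) = harmonic (2 * n) - harmonic n / 2 := by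
  induction n with
  | zero => simp
  | succ n ih =>
    rw [Finset.sum_range_succ, ih, mul_add_one, harmonic_succ, harmonic_succ, harmonic_succ]
    push_cast
    field_simp
    ring

lemma tendsto_two_mul_sum_one_div_odd_sub_log :
    Tendsto (fun n : ℕ ↦ 2 * ∑ j ∈ Finset.range n, 1 / (2 * (j : ℝ) + 1) - log n) atTop
      (𝓝 (eulerMascheroniConstant + 2 * log 2)) := by
  have heven := tendsto_harmonic_sub_log.comp (tendsto_id.const_mul_atTop' (r := 2) two_pos)
  have hlim := ((heven.const_mul 2).sub tendsto_harmonic_sub_log).add_const (2 * log 2)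
  rw [two_mul eulerMascheroniConstant, add_sub_cancel_right] at hlim
  refine hlim.congr' ?_
  filter_upwards [eventually_ne_atTop 0] with n hn
  simp only [Function.comp_apply, id_eq, sum_one_div_odd_eq_harmonic, Nat.cast_mul, Nat.cast_ofNat]
  rw [log_mul two_ne_zero (by positivity)]
  ring

lemma sinc_pos {x : ℝ} (hx₀ : 0 ≤ x) (hx : x < π) : 0 < sinc x := by
  rcases hx₀.eq_or_lt with rfl | hpos
  · simp
  · rw [sinc_of_ne_zero hpos.ne']
    exact div_pos (sin_pos_of_pos_of_lt_pi hpos hx) hpos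

lemma hasDerivAt_log_sinc {x : ℝ} (hx₀ : 0 < x) (hx : x < π) :
    HasDerivAt (fun x ↦ log (sinc x)) (cos x / sin x - 1 / x) x := by
  have hsin : 0 < sin x := sin_pos_of_pos_of_lt_pi hx₀ hx
  rw [one_div]
  refine (((hasDerivAt_sin x).log hsin.ne').sub (hasDerivAt_log hx₀.ne')).congr_of_eventuallyEq ?_
  filter_upwards [isOpen_Ioo.mem_nhds ⟨hx₀, hx⟩] with y hy
  rw [sinc_of_ne_zero hy.1.ne', log_div (sin_pos_of_pos_of_lt_pi hy.1 hy.2).ne' hy.1.ne',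
    Pi.sub_apply]

lemma hasDerivAt_log_sinc_half_sub_log_cos_half {x : ℝ} (hx₀ : 0 < x) (hx : x < π) :
    HasDerivAt (fun x ↦ log (sinc (x / 2)) - log (cos (x / 2))) (1 / sin x - 1 / x) x := by
  have hhalf : HasDerivAt (fun x : ℝ ↦ x / 2) (1 / 2) x := (hasDerivAt_id x).div_const 2
  have hsin : 0 < sin (x / 2) := sin_pos_of_pos_of_lt_pi (by linarith) (by linarith)
  have hcos : 0 < cos (x / 2) := cos_pos_of_mem_Ioo ⟨by linarith, by linarith⟩
  have hsinc := (hasDerivAt_log_sinc (x := x / 2) (by linarith) (by linarith)).comp x hhalf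
  refine (hsinc.sub (hhalf.cos.log hcos.ne')).congr_deriv ?_
  have hsin_two := sin_two_mul (x / 2)
  rw [mul_div_cancel₀ x two_ne_zero] at hsin_two
  rw [hsin_two]
  field_simp
  linear_combination x * sin_sq_add_cos_sq (x / 2)

lemma inv_le_inv_sin {x : ℝ} (hx₀ : 0 < x) (hx : x < π) : 1 / x ≤ 1 / sin x :=
  one_div_le_one_div_of_le (sin_pos_of_pos_of_lt_pi hx₀ hx) (sin_lt hx₀).le

lemma continuousOn_log_sinc_half_sub_log_cos_half :
    ContinuousOn (fun x ↦ log (sinc (x / 2)) - log (cos (x / 2))) (Set.Ico 0 π) := by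
  have hsinc : Continuous fun x : ℝ ↦ sinc (x / 2) := continuous_sinc.comp (by fun_prop)
  have hcos : Continuous fun x : ℝ ↦ cos (x / 2) := by fun_prop
  refine (hsinc.continuousOn.log fun x hx ↦ ?_).sub (hcos.continuousOn.log fun x hx ↦ ?_)
  · exact (sinc_pos (by linarith [hx.1]) (by linarith [hx.1, hx.2])).ne'
  · exact (cos_pos_of_mem_Ioo ⟨by linarith [hx.1, pi_pos], by linarith [hx.2]⟩).ne'

lemma intervalIntegrable_inv_sin_sub_inv {b : ℝ} (hb₀ : 0 ≤ b) (hb : b < π) :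
    IntervalIntegrable (fun x ↦ 1 / sin x - 1 / x) volume 0 b := by
  refine intervalIntegral.intervalIntegrable_deriv_of_nonneg
    (g := fun x ↦ log (sinc (x / 2)) - log (cos (x / 2))) ?_ ?_ ?_
  · rw [Set.uIcc_of_le hb₀]
    exact continuousOn_log_sinc_half_sub_log_cos_half.mono (Set.Icc_subset_Ico_right hb)
  all_goals
    rw [min_eq_left hb₀, max_eq_right hb₀]
    intro x hx
  · exact hasDerivAt_log_sinc_half_sub_log_cos_half hx.1 (hx.2.trans hb)
  · exact sub_nonneg.mpr (inv_le_inv_sin hx.1 (hx.2.trans hb))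

lemma integral_inv_sin_sub_inv {b : ℝ} (hb₀ : 0 ≤ b) (hb : b < π) :
    ∫ x in 0..b, (1 / sin x - 1 / x) = log (sinc (b / 2)) - log (cos (b / 2)) := by
  rw [intervalIntegral.integral_eq_sub_of_hasDerivAt_of_le hb₀
    (continuousOn_log_sinc_half_sub_log_cos_half.mono (Set.Icc_subset_Ico_right hb))
    (fun x hx ↦ hasDerivAt_log_sinc_half_sub_log_cos_half hx.1 (hx.2.trans hb))
    (intervalIntegrable_inv_sin_sub_inv hb₀ hb)]
  simp

lemma integral_inv_sin_sub_inv_zero_pi_div_two :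
    ∫ x in 0..π / 2, (1 / sin x - 1 / x) = log (4 / π) := by
  rw [integral_inv_sin_sub_inv pi_div_two_pos.le (div_two_lt_of_pos pi_pos),
    show π / 2 / 2 = π / 4 by ring, sinc_of_ne_zero (by positivity), sin_pi_div_four,
    cos_pi_div_four, ← log_div (by positivity) (by positivity)]
  congr 1
  field_simp

/-- The entire cosine integral `Cin x = ∫₀ˣ (1 - cos t) / t dt`. The junk value `0` of the
integrand at `t = 0` is also its limit there. -/
noncomputable def cosIntegralIn (x : ℝ) : ℝ := ∫ t in 0..x, (1 - cos t) / t

lemma one_sub_cos_mul_div (c x : ℝ) :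
    (1 - cos (c * x)) / x = c * (sin (c * x / 2) * sinc (c * x / 2)) := by
  rcases eq_or_ne c 0 with rfl | hc
  · simp
  rcases eq_or_ne x 0 with rfl | hx
  · simp
  rw [sinc_of_ne_zero (by positivity), show c * x = 2 * (c * x / 2) by ring, cos_two_mul, cos_sq']
  field_simp
  ring

lemma continuous_one_sub_cos_mul_div (c : ℝ) : Continuous fun x ↦ (1 - cos (c * x)) / x := by
  simp_rw [one_sub_cos_mul_div]
  exact continuous_const.mul (Continuous.mul (by fun_prop) (continuous_sinc.comp (by fun_prop)))

lemma cosIntegralIn_mul (c x : ℝ) :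
    cosIntegralIn (c * x) = ∫ t in 0..x, (1 - cos (c * t)) / t := by
  rcases eq_or_ne c 0 with rfl | hc
  · simp [cosIntegralIn]
  have hscale := intervalIntegral.mul_integral_comp_mul_left (f := fun t ↦ (1 - cos t) / t)
    (a := 0) (b := x) c
  rw [mul_zero] at hscale
  rw [cosIntegralIn, ← hscale, ← intervalIntegral.integral_const_mul]
  refine intervalIntegral.integral_congr fun t _ ↦ ?_
  rw [← mul_div_assoc, mul_div_mul_left _ _ hc]

lemma cosIntegralIn_nat_mul_pi (n : ℕ) :
    cosIntegralIn (n * π) = 2 * ∑ j ∈ Finset.range n, 1 / (2 * (j : ℝ) + 1) - log (4 / π) +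
      ∫ θ in 0..π / 2, cos (2 * n * θ) * (1 / sin θ - 1 / θ) := by
  have hdiff := intervalIntegrable_inv_sin_sub_inv pi_div_two_pos.le (div_two_lt_of_pos pi_pos)
  have hsin := (continuous_one_sub_cos_two_mul_div_sin n).intervalIntegrable
    (μ := volume) 0 (π / 2)
  have hcos := hdiff.continuousOn_mul (g := fun θ ↦ cos (2 * n * θ)) (by fun_prop)
  rw [show n * π = 2 * n * (π / 2) by ring, cosIntegralIn_mul,
    ← integral_one_sub_cos_two_mul_div_sin, ← integral_inv_sin_sub_inv_zero_pi_div_two,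
    ← intervalIntegral.integral_sub hsin hdiff,
    ← intervalIntegral.integral_add (hsin.sub hdiff) hcos]
  refine intervalIntegral.integral_congr fun θ _ ↦ ?_
  ring

lemma tendsto_cosIntegralIn_nat_mul_pi_sub_log :
    Tendsto (fun n : ℕ ↦ cosIntegralIn (n * π) - log (n * π)) atTop
      (𝓝 eulerMascheroniConstant) := by
  have hdiff := intervalIntegrable_inv_sin_sub_inv pi_div_two_pos.le (div_two_lt_of_pos pi_pos)
  have hrem := (tendsto_intervalIntegral_cos_mul_mul_atTop hdiff).comp
    (tendsto_natCast_atTop_atTop.const_mul_atTop two_pos)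
  have hlim := (tendsto_two_mul_sum_one_div_odd_sub_log.sub_const (2 * log 2)).add hrem
  rw [add_sub_cancel_right, add_zero] at hlim
  refine hlim.congr' ?_
  filter_upwards [eventually_ne_atTop 0] with n hn
  rw [cosIntegralIn_nat_mul_pi, log_mul (by positivity) pi_ne_zero,
    log_div four_ne_zero pi_ne_zero, log_four_eq, Function.comp_apply]
  ring

lemma intervalIntegrable_log_mul_sin (c a b : ℝ) :
    IntervalIntegrable (fun x ↦ log x * sin (c * x)) volume a b :=
  intervalIntegral.intervalIntegrable_log'.mul_continuousOn (by fun_prop)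

lemma continuous_one_sub_cos_mul_mul_log (c : ℝ) :
    Continuous fun x ↦ (1 - cos (c * x)) * log x := by
  have heq (x : ℝ) : (1 - cos (c * x)) * log x = (1 - cos (c * x)) / x * (x * log x) := by
    rcases eq_or_ne x 0 with rfl | hx
    · simp
    · field_simp
  simp_rw [heq]
  exact (continuous_one_sub_cos_mul_div c).mul continuous_mul_log

lemma mul_integral_log_mul_sin (c b : ℝ) :
    c * ∫ x in 0..b, log x * sin (c * x) = (1 - cos (c * b)) * log b - cosIntegralIn (c * b) := by
  have hlog := (intervalIntegrable_log_mul_sin c 0 b).const_mul c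
  have hdiv := (continuous_one_sub_cos_mul_div c).intervalIntegrable (μ := volume) 0 b
  have hderiv (x : ℝ) (hx : x ≠ 0) : HasDerivAt (fun x ↦ (1 - cos (c * x)) * log x)
      (c * (log x * sin (c * x)) + (1 - cos (c * x)) / x) x := by
    have hcos : HasDerivAt (fun x ↦ 1 - cos (c * x)) (sin (c * x) * c) x := by
      simpa using ((hasDerivAt_id x).const_mul c).cos.const_sub 1
    exact (hcos.mul (hasDerivAt_log hx)).congr_deriv (by ring)
  have hparts := integral_eq_of_hasDerivAt_off_countable _ _ (Set.countable_singleton 0)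
    (continuous_one_sub_cos_mul_mul_log c).continuousOn (fun x hx ↦ hderiv x hx.2) (hlog.add hdiv)
  rw [intervalIntegral.integral_add hlog hdiv, intervalIntegral.integral_const_mul,
    ← cosIntegralIn_mul] at hparts
  simp only [mul_zero, cos_zero, sub_self, zero_mul, sub_zero] at hparts
  linarith

lemma integral_sin_two_pi_mul_nat (k : ℕ) : ∫ x in (0 : ℝ)..1, sin (2 * π * k * x) = 0 := by
  rcases eq_or_ne k 0 with rfl | hk
  · simp
  have hcos : cos (2 * π * k) = 1 := by simpa [mul_comm] using cos_nat_mul_two_pi k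
  rw [intervalIntegral.integral_comp_mul_left _ (by positivity), integral_sin]
  simp [hcos]

lemma integral_id_mul_sin_mul {c : ℝ} (hc : c ≠ 0) (b : ℝ) :
    ∫ x in 0..b, x * sin (c * x) = sin (c * b) / c ^ 2 - b * cos (c * b) / c := by
  have hderiv (x : ℝ) : HasDerivAt (fun x ↦ sin (c * x) / c ^ 2 - x * cos (c * x) / c)
      (x * sin (c * x)) x := by
    have hlin : HasDerivAt (fun x ↦ c * x) c x := by simpa using (hasDerivAt_id x).const_mul c
    have hprod := (hasDerivAt_id x).mul hlin.cos
    refine ((hlin.sin.div_const _).sub (hprod.div_const _)).congr_deriv ?_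
    simp only [id_eq]
    field_simp
    ring
  rw [intervalIntegral.integral_eq_sub_of_hasDerivAt (fun x _ ↦ hderiv x)
    (Continuous.intervalIntegrable (by fun_prop) _ _)]
  simp

lemma integral_id_mul_sin_two_pi_mul_nat {k : ℕ} (hk : k ≠ 0) :
    ∫ x in (0 : ℝ)..1, x * sin (2 * π * k * x) = -(1 / (2 * π * k)) := by
  have hcos : cos (2 * π * k) = 1 := by simpa [mul_comm] using cos_nat_mul_two_pi k
  have hsin : sin (2 * π * k) = 0 := by
    simpa [mul_comm, mul_assoc, mul_left_comm] using sin_nat_mul_pi (2 * k)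
  rw [integral_id_mul_sin_mul (by positivity), mul_one, hcos, hsin]
  simp

lemma hasDerivAt_cos_mul_sin_mul_log_sin {θ : ℝ} (hθ : sin θ ≠ 0) :
    HasDerivAt (fun θ ↦ cos θ * (sin θ * log (sin θ)))
      (cos (2 * θ) * log (sin θ) + cos θ ^ 2) θ := by
  have hsin := hasDerivAt_sin θ
  refine ((hasDerivAt_cos θ).mul (hsin.mul (hsin.log hθ))).congr_deriv ?_
  simp only [Pi.mul_apply]
  rw [cos_two_mul']
  field_simp
  ring

lemma hasDerivAt_sin_sq_mul_log_sin_sub {θ : ℝ} (hθ : sin θ ≠ 0) :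
    HasDerivAt (fun θ ↦ sin θ ^ 2 * log (sin θ) - sin θ ^ 2 / 2) (sin (2 * θ) * log (sin θ)) θ := by
  have hsin := hasDerivAt_sin θ
  refine (((hsin.pow 2).mul (hsin.log hθ)).sub ((hsin.pow 2).div_const 2)).congr_deriv ?_
  simp only [Pi.pow_apply]
  rw [sin_two_mul]
  field_simp
  ring

lemma continuous_sin_mul_log_sin : Continuous fun θ ↦ sin θ * log (sin θ) :=
  continuous_mul_log.comp continuous_sin

lemma continuous_sin_sq_mul_log_sin : Continuous fun θ ↦ sin θ ^ 2 * log (sin θ) := by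
  simp_rw [sq, mul_assoc]
  exact continuous_sin.mul continuous_sin_mul_log_sin

lemma integral_cos_two_mul_mul_log_sin :
    ∫ θ in 0..π, cos (2 * θ) * log (sin θ) = -(π / 2) := by
  have hlog : IntervalIntegrable (fun θ ↦ cos (2 * θ) * log (sin θ)) volume 0 π :=
    intervalIntegrable_log_sin.continuousOn_mul (by fun_prop)
  have hcos : IntervalIntegrable (fun θ ↦ cos θ ^ 2) volume 0 π :=
    Continuous.intervalIntegrable (by fun_prop) _ _
  have hftc := intervalIntegral.integral_eq_sub_of_hasDerivAt_of_le pi_pos.le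
    (f := fun θ ↦ cos θ * (sin θ * log (sin θ)))
    (continuous_cos.mul continuous_sin_mul_log_sin).continuousOn
    (fun θ hθ ↦ hasDerivAt_cos_mul_sin_mul_log_sin (sin_pos_of_mem_Ioo hθ).ne') (hlog.add hcos)
  rw [intervalIntegral.integral_add hlog hcos, integral_cos_sq] at hftc
  simp only [sin_zero, sin_pi, mul_zero, zero_mul, sub_zero, zero_add] at hftc
  linarith

lemma integral_sin_sq_mul_log_sin :
    ∫ θ in 0..π, sin θ ^ 2 * log (sin θ) = π / 4 - π * log 2 / 2 := by
  have hhalf (θ : ℝ) : sin θ ^ 2 * log (sin θ) =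
      1 / 2 * (log (sin θ) - cos (2 * θ) * log (sin θ)) := by
    rw [cos_two_mul, cos_sq']
    ring
  simp_rw [hhalf]
  have hlog : IntervalIntegrable (fun θ ↦ log (sin θ)) volume 0 π := intervalIntegrable_log_sin
  rw [intervalIntegral.integral_const_mul,
    intervalIntegral.integral_sub hlog (hlog.continuousOn_mul (by fun_prop)),
    integral_log_sin_zero_pi, integral_cos_two_mul_mul_log_sin]
  ring

lemma integral_sub_mul_sin_two_mul_mul_log_sin (a : ℝ) :
    ∫ θ in 0..π, (θ - a) * (sin (2 * θ) * log (sin θ)) = π * log 2 / 2 := by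
  have hsq : IntervalIntegrable (fun θ ↦ sin θ ^ 2 / 2) volume 0 π :=
    Continuous.intervalIntegrable (by fun_prop) _ _
  have hlog := continuous_sin_sq_mul_log_sin.intervalIntegrable (μ := volume) 0 π
  have hparts := intervalIntegral.integral_mul_deriv_eq_deriv_mul_of_hasDerivAt
    (u := fun θ ↦ θ - a) (v := fun θ ↦ sin θ ^ 2 * log (sin θ) - sin θ ^ 2 / 2)
    (u' := fun _ ↦ 1) (a := 0) (b := π) (by fun_prop)
    (continuous_sin_sq_mul_log_sin.continuousOn.sub (by fun_prop))
    (fun θ _ ↦ (hasDerivAt_id θ).sub_const a)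
    (fun θ hθ ↦ hasDerivAt_sin_sq_mul_log_sin_sub (sin_pos_of_mem_Ioo
      (by simpa [pi_pos.le] using hθ)).ne')
    intervalIntegrable_const (intervalIntegrable_log_sin.continuousOn_mul (by fun_prop))
  rw [hparts]
  simp only [one_mul]
  rw [intervalIntegral.integral_sub hlog hsq, integral_sin_sq_mul_log_sin,
    intervalIntegral.integral_div, integral_sin_sq]
  simp only [sin_zero, sin_pi]
  ring

lemma integral_sub_half_mul_sin_two_pi_mul_mul_log_sin :
    ∫ x in (0 : ℝ)..1, (x - 1 / 2) * sin (2 * π * x) * log (sin (π * x)) =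
      log 2 / (2 * π) := by
  have hscale (x : ℝ) : (x - 1 / 2) * sin (2 * π * x) * log (sin (π * x)) =
      π⁻¹ * ((π * x - π / 2) * (sin (2 * (π * x)) * log (sin (π * x)))) := by
    rw [mul_assoc 2]
    field_simp
  simp_rw [hscale]
  rw [intervalIntegral.integral_const_mul, intervalIntegral.integral_comp_mul_left
    (fun θ ↦ (θ - π / 2) * (sin (2 * θ) * log (sin θ))) pi_ne_zero, mul_zero, mul_one,
    integral_sub_mul_sin_two_mul_mul_log_sin, smul_eq_mul]
  field_simp

lemma log_Gamma_add_one {x : ℝ} (hx : 0 < x) : log (Gamma (x + 1)) = log (Gamma x) + log x := by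
  rw [Gamma_add_one hx.ne', log_mul hx.ne' (Gamma_pos_of_pos hx).ne', add_comm]

lemma intervalIntegrable_log_Gamma {a b : ℝ} (ha : 0 ≤ a) (hb : 0 ≤ b) :
    IntervalIntegrable (fun x ↦ log (Gamma x)) volume a b := by
  have hshift : ContinuousOn (fun x ↦ log (Gamma (x + 1))) (Set.uIcc a b) :=
    (convexOn_log_Gamma.continuousOn isOpen_Ioi).comp (by fun_prop) fun x hx ↦
      add_pos_of_nonneg_of_pos ((le_min ha hb).trans hx.1) one_pos
  refine (hshift.intervalIntegrable.sub intervalIntegral.intervalIntegrable_log').congr ?_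
  intro x hx
  simp only [log_Gamma_add_one ((le_min ha hb).trans_lt hx.1), add_sub_cancel_right]

lemma log_Gamma_add_log_Gamma_one_sub {x : ℝ} (hx : x ∈ Set.Ioo 0 1) :
    log (Gamma x) + log (Gamma (1 - x)) = log π - log (sin (π * x)) := by
  have hsin : 0 < sin (π * x) :=
    sin_pos_of_pos_of_lt_pi (mul_pos pi_pos hx.1) (mul_lt_of_lt_one_right pi_pos hx.2)
  rw [← log_mul (Gamma_pos_of_pos hx.1).ne' (Gamma_pos_of_pos (sub_pos.mpr hx.2)).ne',
    Gamma_mul_Gamma_one_sub, log_div pi_ne_zero hsin.ne']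

lemma intervalIntegrable_log_sin_pi_mul (a b : ℝ) :
    IntervalIntegrable (fun x ↦ log (sin (π * x))) volume a b := by
  have h := (intervalIntegrable_log_sin (a := π * a) (b := π * b)).comp_mul_left (c := π)
  simpa [Function.comp_def, pi_ne_zero] using h

lemma two_mul_integral_mul_log_Gamma {w : ℝ → ℝ} (hw : ContinuousOn w (Set.uIcc 0 1))
    (hsymm : ∀ x ∈ Set.Ioo 0 1, w (1 - x) = w x) :
    2 * ∫ x in (0 : ℝ)..1, w x * log (Gamma x) =
      log π * (∫ x in (0 : ℝ)..1, w x) - ∫ x in (0 : ℝ)..1, w x * log (sin (π * x)) := by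
  have hΓ : IntervalIntegrable (fun x ↦ w x * log (Gamma x)) volume 0 1 :=
    (intervalIntegrable_log_Gamma le_rfl zero_le_one).continuousOn_mul hw
  have hΓ_reflect : IntervalIntegrable (fun x ↦ w (1 - x) * log (Gamma (1 - x))) volume 0 1 := by
    simpa using (hΓ.comp_sub_left 1).symm
  have hsin : IntervalIntegrable (fun x ↦ w x * log (sin (π * x))) volume 0 1 :=
    (intervalIntegrable_log_sin_pi_mul 0 1).continuousOn_mul hw
  have hreflect := intervalIntegral.integral_comp_sub_left (a := 0) (b := 1)
    (fun x ↦ w x * log (Gamma x)) 1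
  rw [sub_self, sub_zero] at hreflect
  calc 2 * ∫ x in (0 : ℝ)..1, w x * log (Gamma x)
    _ = ∫ x in (0 : ℝ)..1, (w x * log (Gamma x) + w (1 - x) * log (Gamma (1 - x))) := by
      rw [intervalIntegral.integral_add hΓ hΓ_reflect, hreflect, two_mul]
    _ = ∫ x in (0 : ℝ)..1, (log π * w x - w x * log (sin (π * x))) := by
      refine intervalIntegral.integral_congr_Ioo_of_le zero_le_one fun x hx ↦ ?_
      simp only [hsymm x hx]
      rw [← mul_add, log_Gamma_add_log_Gamma_one_sub hx]
      ring
    _ = _ := by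
      rw [intervalIntegral.integral_sub (hw.intervalIntegrable.const_mul _) hsin,
        intervalIntegral.integral_const_mul]

lemma logGammaSeq_le_log_Gamma {x : ℝ} (hx : 0 < x) {n : ℕ} (hn : n ≠ 0) :
    BohrMollerup.logGammaSeq x n ≤ log (Gamma x) := by
  simpa using BohrMollerup.ge_logGammaSeq convexOn_log_Gamma (fun hy ↦ log_Gamma_add_one hy) hx hn

lemma log_Gamma_le_logGammaSeq_add {x : ℝ} (hx₀ : 0 < x) (hx : x ≤ 1) (n : ℕ) :
    log (Gamma x) ≤ BohrMollerup.logGammaSeq x n + x * (log (n + 1) - log n) := by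
  have h := BohrMollerup.le_logGammaSeq convexOn_log_Gamma (fun hy ↦ log_Gamma_add_one hy) hx₀ hx n
  simp only [Function.comp_apply, Gamma_one, log_one] at h
  linarith

lemma abs_logGammaSeq_sub_log_Gamma_le {x : ℝ} (hx₀ : 0 < x) (hx : x ≤ 1) {n : ℕ} (hn : n ≠ 0) :
    |BohrMollerup.logGammaSeq x n - log (Gamma x)| ≤ log (n + 1) - log n := by
  have hstep : 0 ≤ log ((n : ℝ) + 1) - log n :=
    sub_nonneg.mpr (log_le_log (by positivity) (by linarith))
  rw [abs_sub_comm, abs_of_nonneg (sub_nonneg.mpr (logGammaSeq_le_log_Gamma hx₀ hn))]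
  linarith [log_Gamma_le_logGammaSeq_add hx₀ hx n, mul_le_of_le_one_left hstep hx]

lemma intervalIntegrable_log_add_const (a b c : ℝ) :
    IntervalIntegrable (fun x ↦ log (x + c)) volume a b := by
  simpa using (intervalIntegral.intervalIntegrable_log' (a := a + c) (b := b + c)).comp_add_right c

lemma intervalIntegrable_logGammaSeq (n : ℕ) (a b : ℝ) :
    IntervalIntegrable (fun x ↦ BohrMollerup.logGammaSeq x n) volume a b := by
  have hsum := IntervalIntegrable.sum (μ := volume) (a := a) (b := b) (Finset.range (n + 1))
    (f := fun m x ↦ log (x + m)) fun m _ ↦ intervalIntegrable_log_add_const a b m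
  rw [Finset.sum_fn] at hsum
  exact (Continuous.intervalIntegrable (by fun_prop) _ _).sub hsum

lemma tendsto_integral_logGammaSeq_mul {g : ℝ → ℝ} (hg : ContinuousOn g (Set.uIcc 0 1)) :
    Tendsto (fun n ↦ ∫ x in (0 : ℝ)..1, BohrMollerup.logGammaSeq x n * g x) atTop
      (𝓝 (∫ x in (0 : ℝ)..1, log (Gamma x) * g x)) := by
  have hΓ := (intervalIntegrable_log_Gamma le_rfl zero_le_one).mul_continuousOn hg
  have hbound (n : ℕ) (hn : n ≠ 0) :
      ‖(∫ x in (0 : ℝ)..1, BohrMollerup.logGammaSeq x n * g x) -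
        ∫ x in (0 : ℝ)..1, log (Gamma x) * g x‖ ≤
      (log (n + 1) - log n) * ∫ x in (0 : ℝ)..1, |g x| := by
    rw [← intervalIntegral.integral_sub
      ((intervalIntegrable_logGammaSeq n 0 1).mul_continuousOn hg) hΓ,
      ← intervalIntegral.integral_const_mul]
    refine intervalIntegral.norm_integral_le_of_norm_le zero_le_one (.of_forall fun x hx ↦ ?_)
      (hg.abs.intervalIntegrable.const_mul _)
    rw [← sub_mul, norm_mul, norm_eq_abs, norm_eq_abs]
    gcongr
    exact abs_logGammaSeq_sub_log_Gamma_le hx.1 hx.2 hn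
  rw [tendsto_iff_norm_sub_tendsto_zero]
  refine squeeze_zero' (.of_forall fun _ ↦ norm_nonneg _)
    ((eventually_ne_atTop 0).mono hbound) ?_
  simpa using tendsto_log_nat_add_one_sub_log.mul_const (∫ x in (0 : ℝ)..1, |g x|)

lemma sum_intervalIntegral_comp_add_nat {E : Type*} [NormedAddCommGroup E] [NormedSpace ℝ E]
    {f : ℝ → E} {N : ℕ} (hf : ∀ m < N, IntervalIntegrable f volume m (m + 1 : ℕ)) :
    ∑ m ∈ Finset.range N, ∫ x in (0 : ℝ)..1, f (x + m) = ∫ x in (0 : ℝ)..N, f x := by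
  have hsum := intervalIntegral.sum_integral_adjacent_intervals (a := fun m : ℕ ↦ (m : ℝ)) hf
  rw [Nat.cast_zero] at hsum
  rw [← hsum]
  refine Finset.sum_congr rfl fun m _ ↦ ?_
  rw [intervalIntegral.integral_comp_add_right, zero_add, add_comm 1, Nat.cast_succ]

lemma sum_integral_log_add_nat_mul_sin (k N : ℕ) :
    ∑ m ∈ Finset.range N, ∫ x in (0 : ℝ)..1, log (x + m) * sin (2 * π * k * x) =
      ∫ x in (0 : ℝ)..N, log x * sin (2 * π * k * x) := by
  have hperiod (m : ℕ) (x : ℝ) : sin (2 * π * k * x) = sin (2 * π * k * (x + m)) := by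
    rw [show 2 * π * k * (x + m) = 2 * π * k * x + (k * m : ℕ) * (2 * π) by push_cast; ring,
      sin_add_nat_mul_two_pi]
  rw [← sum_intervalIntegral_comp_add_nat fun _ _ ↦ intervalIntegrable_log_mul_sin _ _ _]
  simp_rw [← hperiod]

lemma integral_logGammaSeq_mul_sin {k : ℕ} (hk : k ≠ 0) (n : ℕ) :
    ∫ x in (0 : ℝ)..1, BohrMollerup.logGammaSeq x n * sin (2 * π * k * x) =
      (cosIntegralIn (2 * π * k * (n + 1)) - log n) / (2 * π * k) := by
  have hexpand (x : ℝ) : BohrMollerup.logGammaSeq x n * sin (2 * π * k * x) =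
      log n * (x * sin (2 * π * k * x)) + log n.factorial * sin (2 * π * k * x) -
        ∑ m ∈ Finset.range (n + 1), log (x + m) * sin (2 * π * k * x) := by
    rw [BohrMollerup.logGammaSeq, ← Finset.sum_mul]
    ring
  have hlin : IntervalIntegrable (fun x : ℝ ↦ log n * (x * sin (2 * π * k * x))) volume 0 1 :=
    Continuous.intervalIntegrable (by fun_prop) _ _
  have hconst : IntervalIntegrable (fun x : ℝ ↦ log n.factorial * sin (2 * π * k * x))
      volume 0 1 := Continuous.intervalIntegrable (by fun_prop) _ _
  have hlog (m : ℕ) : IntervalIntegrable (fun x : ℝ ↦ log (x + m) * sin (2 * π * k * x))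
      volume 0 1 := (intervalIntegrable_log_add_const 0 1 m).mul_continuousOn (by fun_prop)
  have hsum : IntervalIntegrable
      (fun x : ℝ ↦ ∑ m ∈ Finset.range (n + 1), log (x + m) * sin (2 * π * k * x)) volume 0 1 := by
    simpa [Finset.sum_fn] using IntervalIntegrable.sum (Finset.range (n + 1)) fun m _ ↦ hlog m
  have hcos : cos (2 * π * k * (n + 1)) = 1 := by
    rw [show 2 * π * k * (n + 1) = (k * (n + 1) : ℕ) * (2 * π) by push_cast; ring,
      cos_nat_mul_two_pi]
  have hparts := mul_integral_log_mul_sin (2 * π * k) (n + 1 : ℕ)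
  push_cast at hparts
  rw [hcos, sub_self, zero_mul, zero_sub] at hparts
  simp_rw [hexpand]
  rw [intervalIntegral.integral_sub (hlin.add hconst) hsum,
    intervalIntegral.integral_add hlin hconst, intervalIntegral.integral_const_mul,
    intervalIntegral.integral_const_mul, integral_sin_two_pi_mul_nat,
    integral_id_mul_sin_two_pi_mul_nat hk, intervalIntegral.integral_finsetSum fun m _ ↦ hlog m,
    sum_integral_log_add_nat_mul_sin]
  push_cast
  field_simp
  linarith

lemma integral_log_Gamma_mul_sin {k : ℕ} (hk : k ≠ 0) :
    ∫ x in (0 : ℝ)..1, log (Gamma x) * sin (2 * π * k * x) =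
      (eulerMascheroniConstant + log (2 * π * k)) / (2 * π * k) := by
  have hindex : Tendsto (fun n ↦ 2 * k * (n + 1)) atTop atTop :=
    (tendsto_add_atTop_nat 1).const_mul_atTop' (by positivity)
  have hlim := (((tendsto_cosIntegralIn_nat_mul_pi_sub_log.comp hindex).add_const
    (log (2 * π * k))).add tendsto_log_nat_add_one_sub_log).div_const (2 * π * k)
  rw [add_zero] at hlim
  refine tendsto_nhds_unique (tendsto_integral_logGammaSeq_mul (by fun_prop))
    (hlim.congr fun n ↦ ?_)
  have harg : ((2 * k * (n + 1) : ℕ) : ℝ) * π = 2 * π * k * (n + 1) := by push_cast; ring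
  rw [integral_logGammaSeq_mul_sin hk, Function.comp_apply, harg,
    log_mul (x := 2 * π * k) (by positivity) (by positivity)]
  ring

lemma integral_sub_half_mul_sin_two_pi_mul :
    ∫ x in (0 : ℝ)..1, (x - 1 / 2) * sin (2 * π * x) = -(1 / (2 * π)) := by
  have hsin := integral_sin_two_pi_mul_nat 1
  have hid := integral_id_mul_sin_two_pi_mul_nat one_ne_zero
  simp only [Nat.cast_one, mul_one] at hsin hid
  simp_rw [sub_mul]
  rw [intervalIntegral.integral_sub (Continuous.intervalIntegrable (by fun_prop) _ _)
    (Continuous.intervalIntegrable (by fun_prop) _ _), intervalIntegral.integral_const_mul, hsin,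
    hid]
  ring

lemma integral_sub_half_mul_sin_mul_log_Gamma :
    ∫ x in (0 : ℝ)..1, (x - 1 / 2) * sin (2 * π * x) * log (Gamma x) =
      -(log (2 * π) / (4 * π)) := by
  have hsymm (x : ℝ) : (1 - x - 1 / 2) * sin (2 * π * (1 - x)) = (x - 1 / 2) * sin (2 * π * x) := by
    rw [show 2 * π * (1 - x) = 2 * π - 2 * π * x by ring, sin_two_pi_sub]
    ring
  have hreflect := two_mul_integral_mul_log_Gamma (w := fun x ↦ (x - 1 / 2) * sin (2 * π * x))
    (by fun_prop) fun x _ ↦ hsymm x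
  rw [integral_sub_half_mul_sin_two_pi_mul, integral_sub_half_mul_sin_two_pi_mul_mul_log_sin]
    at hreflect
  rw [← mul_right_inj' two_ne_zero, hreflect, log_mul two_ne_zero pi_ne_zero]
  field_simp
  ring

/-- `∫₀¹ x·log Γ(x)·sin(2πx) dx = γ/(4π)`, where `γ` is the Euler–Mascheroni constant. -/
theorem integral_x_log_Gamma_sin :
    ∫ x in (0:ℝ)..1, x * Real.log (Real.Gamma x) * Real.sin (2 * π * x) =
      Real.eulerMascheroniConstant / (4 * π) := by
  have hΓ := intervalIntegrable_log_Gamma le_rfl zero_le_one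
  have hsymm : IntervalIntegrable (fun x ↦ (x - 1 / 2) * sin (2 * π * x) * log (Gamma x))
      volume 0 1 := hΓ.continuousOn_mul (by fun_prop)
  have hsin : IntervalIntegrable (fun x ↦ log (Gamma x) * sin (2 * π * x)) volume 0 1 :=
    hΓ.mul_continuousOn (by fun_prop)
  have hkummer : ∫ x in (0 : ℝ)..1, log (Gamma x) * sin (2 * π * x) =
      (eulerMascheroniConstant + log (2 * π)) / (2 * π) := by
    simpa using integral_log_Gamma_mul_sin one_ne_zero
  calc ∫ x in (0 : ℝ)..1, x * log (Gamma x) * sin (2 * π * x)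
    _ = ∫ x in (0 : ℝ)..1, ((x - 1 / 2) * sin (2 * π * x) * log (Gamma x) +
          1 / 2 * (log (Gamma x) * sin (2 * π * x))) := by
      congr! 2 with x
      ring
    _ = -(log (2 * π) / (4 * π)) +
          1 / 2 * ((eulerMascheroniConstant + log (2 * π)) / (2 * π)) := by
      rw [intervalIntegral.integral_add hsymm (hsin.const_mul _),
        intervalIntegral.integral_const_mul, hkummer, integral_sub_half_mul_sin_mul_log_Gamma]
    _ = eulerMascheroniConstant / (4 * π) := by ring
end

section
/- The series ∑_{n=1}^∞ ζ(2n+1)/((n+1)(2n+5)) converges and equals (1/540)·(1440·log A − 1440·ζ′(−3) − 108·γ − 157), where A = e^{1/12 − ζ′(−1)} is the Glaisher–Kinkelin constant and γ is the Euler–Mascheroni constant. -/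
open Real

/-!
Expanding each zeta value as a Dirichlet series and exchanging the two nonnegative sums leaves, for
every `m ≥ 1`, the series `∑ 1 / ((n + 2) (2 n + 7) m ^ (2 n + 3))`. Partial fractions turn it into
logarithmic series in `1 / m`, so its sum is a combination of `log (m - 1)`, `log m` and
`log (m + 1)` with polynomial coefficients, up to a rational function of `m`. Summed over `m ≤ N`
these logarithms telescope to `8 / 3 * (∑ m ^ 3 log m + ∑ m log m)` plus elementary terms.

Corrected by the first few Bernoulli terms of Euler–Maclaurin summation, the partial sums of
`∑ m ^ (-s)` converge to `ζ` locally uniformly on a half-plane without the pole, beyond `1 < re s`.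
Convergence therefore passes to derivatives in `s`, and at `s = -1` and `s = -3` it gives the
asymptotics of `∑ m log m` and `∑ m ^ 3 log m` with constant terms `-ζ′(-1)` and `-ζ′(-3)`, up to
explicit rational numbers.
-/

open Filter Topology

open scoped Nat

section EulerMaclaurin

lemma hasDerivAt_bernoulliFun_div_factorial (k : ℕ) (x : ℝ) :
    HasDerivAt (fun x => bernoulliFun (k + 1) x / (k + 1)!) (bernoulliFun k x / k !) x := by
  refine ((hasDerivAt_bernoulliFun (k + 1) x).div_const _).congr_deriv ?_
  rw [Nat.factorial_succ, Nat.add_sub_cancel]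
  push_cast
  field_simp

lemma neg_one_pow_mul_bernoulliFun_one (k : ℕ) : (-1) ^ k * bernoulliFun k 1 = bernoulli k := by
  rw [bernoulliFun, Polynomial.eval_one_map, Polynomial.bernoulli_eval_one, bernoulli]
  simp

lemma neg_one_pow_mul_bernoulliFun_zero (k : ℕ) :
    (-1) ^ k * bernoulliFun k 0 = bernoulli k + if k = 1 then 1 else 0 := by
  rw [← neg_one_pow_mul_bernoulliFun_one, bernoulliFun_eval_one]
  split_ifs with hk
  · simp [hk]
  · simp

variable {E : Type*} [NormedAddCommGroup E] [NormedSpace ℝ E] {g : ℕ → ℝ → E} {a : ℝ} {K : ℕ}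

lemma hasDerivAt_sum_bernoulliFun_smul {x : ℝ}
    (hg : ∀ k ≤ K, HasDerivAt (g k) (g (k + 1) x) x) :
    HasDerivAt
      (fun x => ∑ k ∈ Finset.range (K + 1), ((-1) ^ k * (bernoulliFun k (x - a) / k !)) • g k x)
      (((-1) ^ K * (bernoulliFun K (x - a) / K !)) • g (K + 1) x) x := by
  induction K with
  | zero => simpa using hg 0 le_rfl
  | succ K ih =>
    simp_rw [Finset.sum_range_succ _ (K + 1)]
    have hB := ((hasDerivAt_bernoulliFun_div_factorial K (x - a)).comp_sub_const x a).const_mul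
      ((-1) ^ (K + 1))
    refine ((ih fun k hk => hg k (hk.trans K.le_succ)).add
      (hB.smul (hg (K + 1) le_rfl))).congr_deriv ?_
    rw [pow_succ]
    module

lemma sum_bernoulliFun_smul_endpoints (hK : 1 ≤ K) :
    ∑ k ∈ Finset.range (K + 1), ((-1) ^ k * (bernoulliFun k 1 / k !)) • g k (a + 1)
      - ∑ k ∈ Finset.range (K + 1), ((-1) ^ k * (bernoulliFun k 0 / k !)) • g k a
      = ∑ k ∈ Finset.range (K + 1), (bernoulli k / k ! : ℝ) • (g k (a + 1) - g k a) - g 1 a := by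
  have h1 : g 1 a = ∑ k ∈ Finset.range (K + 1), ((if k = 1 then 1 else 0) / k ! : ℝ) • g k a := by
    rw [Finset.sum_eq_single_of_mem 1 (Finset.mem_range.2 (by omega)) fun k _ hk => by simp [hk]]
    simp
  rw [h1, ← Finset.sum_sub_distrib, ← Finset.sum_sub_distrib]
  refine Finset.sum_congr rfl fun k _ => ?_
  rw [← mul_div_assoc, ← mul_div_assoc, neg_one_pow_mul_bernoulliFun_one,
    neg_one_pow_mul_bernoulliFun_zero]
  module

/- Integrate `± B_K(x - a) / K! • g (K + 1) x` over `[a, a + 1]`: it is the derivative of the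
telescoping sum `∑ ± B_k(x - a) / k! • g k x`. -/
theorem norm_sum_bernoulli_smul_sub_le {M C : ℝ} (hK : 1 ≤ K)
    (hg : ∀ k ≤ K, ∀ x ∈ Set.Icc a (a + 1), HasDerivAt (g k) (g (k + 1) x) x)
    (hM : ∀ t ∈ Set.Icc (0 : ℝ) 1, |bernoulliFun K t| ≤ M)
    (hC : ∀ x ∈ Set.Icc a (a + 1), ‖g (K + 1) x‖ ≤ C) :
    ‖∑ k ∈ Finset.range (K + 1), (bernoulli k / k ! : ℝ) • (g k (a + 1) - g k a) - g 1 a‖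
      ≤ M / K ! * C := by
  have hbound : ∀ x ∈ Set.Icc a (a + 1),
      ‖((-1) ^ K * (bernoulliFun K (x - a) / K !)) • g (K + 1) x‖ ≤ M / K ! * C := fun x hx => by
    have hx' : x - a ∈ Set.Icc (0 : ℝ) 1 := ⟨by linarith [hx.1], by linarith [hx.2]⟩
    rw [norm_smul]
    have hB : ‖(-1) ^ K * (bernoulliFun K (x - a) / K !)‖ ≤ M / K ! := by
      simpa [abs_mul, abs_div] using div_le_div_of_nonneg_right (hM _ hx') (Nat.cast_nonneg _)
    exact mul_le_mul hB (hC x hx) (norm_nonneg _) ((norm_nonneg _).trans hB)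
  have hmvt := (convex_Icc a (a + 1)).norm_image_sub_le_of_norm_hasDerivWithin_le
    (fun x hx => (hasDerivAt_sum_bernoulliFun_smul (a := a)
      fun k hk => hg k hk x hx).hasDerivWithinAt)
    hbound (Set.left_mem_Icc.2 (by simp)) (Set.right_mem_Icc.2 (by simp))
  simpa [sum_bernoulliFun_smul_endpoints hK] using hmvt

end EulerMaclaurin

section Zeta

/-- The `k`-th derivative in `x` of `x ^ (1 - s) / (1 - s)`: index `0` is an antiderivative of
`x ^ (-s)`, index `1` is `x ^ (-s)` itself. These are the terms of the Euler–Maclaurin formula for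
`ζ(s)`. For `s = 1` all of them take the junk value `0`. -/
noncomputable def cpowDeriv (k : ℕ) (s : ℂ) (x : ℝ) : ℂ :=
  (descPochhammer ℂ k).eval (1 - s) / (1 - s) * (x : ℂ) ^ (1 - s - k)

/-- The Euler–Maclaurin approximation of `∑_{m ≥ x} m ^ (-s)`, through the term with the
Bernoulli number `B_K`. -/
noncomputable def zetaTail (K : ℕ) (x : ℝ) (s : ℂ) : ℂ :=
  -∑ k ∈ Finset.range (K + 1), (bernoulli k / k ! : ℝ) • cpowDeriv k s x

/-- The Euler–Maclaurin approximation of `ζ(s)`, by the first `N` terms of the Dirichlet series and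
the approximate tail `zetaTail`. -/
noncomputable def zetaApprox (K N : ℕ) (s : ℂ) : ℂ :=
  ∑ m ∈ Finset.range N, ((m + 1 : ℝ) : ℂ) ^ (-s) + zetaTail K (N + 1) s

variable {K k : ℕ} {s : ℂ} {x a : ℝ}

lemma cpowDeriv_one (hs : s ≠ 1) : cpowDeriv 1 s x = (x : ℂ) ^ (-s) := by
  have : 1 - s ≠ 0 := sub_ne_zero.2 hs.symm
  simp [cpowDeriv, this]

lemma hasDerivAt_cpowDeriv (hx : 0 < x) : HasDerivAt (cpowDeriv k s) (cpowDeriv (k + 1) s x) x := by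
  have h : HasDerivAt (fun z : ℂ => z ^ (1 - s - k)) _ (x : ℂ) :=
    (hasDerivAt_id (x : ℂ)).cpow_const (by simp [hx])
  refine ((h.const_mul ((descPochhammer ℂ k).eval (1 - s) / (1 - s))).comp_ofReal).congr_deriv ?_
  rw [cpowDeriv, descPochhammer_succ_eval, Nat.cast_succ, ← sub_sub, id]
  ring

lemma differentiableAt_cpowDeriv (hx : 0 < x) (hs : s ≠ 1) :
    DifferentiableAt ℂ (fun s => cpowDeriv k s x) s := by
  have hx' : (x : ℂ) ≠ 0 := by exact_mod_cast hx.ne'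
  have hs' : 1 - s ≠ 0 := sub_ne_zero.2 hs.symm
  unfold cpowDeriv
  fun_prop (disch := simp [*])

lemma norm_cpowDeriv (hx : 0 < x) :
    ‖cpowDeriv k s x‖ = ‖(descPochhammer ℂ k).eval (1 - s) / (1 - s)‖ * x ^ (1 - s.re - k) := by
  rw [cpowDeriv, norm_mul, Complex.norm_cpow_eq_rpow_re_of_pos hx]
  simp

lemma tendsto_cpowDeriv_atTop (hs : 1 < s.re) : Tendsto (cpowDeriv k s) atTop (𝓝 0) := by
  rw [tendsto_zero_iff_norm_tendsto_zero]
  have hexp : 0 < -(1 - s.re - k) := by linarith [k.cast_nonneg (α := ℝ)]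
  have h := (tendsto_rpow_neg_atTop hexp).const_mul
    ‖(descPochhammer ℂ k).eval (1 - s) / (1 - s)‖
  rw [mul_zero] at h
  refine h.congr' ?_
  filter_upwards [eventually_gt_atTop 0] with x hx
  rw [norm_cpowDeriv hx, neg_neg]

lemma differentiableAt_zetaTail (hx : 0 < x) (hs : s ≠ 1) :
    DifferentiableAt ℂ (zetaTail K x) s :=
  (DifferentiableAt.fun_sum fun _ _ =>
    (differentiableAt_cpowDeriv hx hs).const_smul (_ : ℝ)).neg

lemma tendsto_zetaTail_atTop (hs : 1 < s.re) :
    Tendsto (fun x => zetaTail K x s) atTop (𝓝 0) := by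
  simpa [zetaTail] using (tendsto_finsetSum (Finset.range (K + 1)) fun k _ =>
    (tendsto_cpowDeriv_atTop (k := k) hs).const_smul (bernoulli k / k ! : ℝ)).neg

lemma norm_cpow_add_zetaTail_sub_le {M : ℝ} (hK : 1 ≤ K) (ha : 0 < a) (hs : s ≠ 1)
    (hre : 0 ≤ s.re + K) (hM : ∀ t ∈ Set.Icc (0 : ℝ) 1, |bernoulliFun K t| ≤ M) :
    ‖(a : ℂ) ^ (-s) + (zetaTail K (a + 1) s - zetaTail K a s)‖
      ≤ M / K ! * (‖(descPochhammer ℂ (K + 1)).eval (1 - s) / (1 - s)‖ * a ^ (-(s.re + K))) := by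
  have hC : ∀ x ∈ Set.Icc a (a + 1), ‖cpowDeriv (K + 1) s x‖
      ≤ ‖(descPochhammer ℂ (K + 1)).eval (1 - s) / (1 - s)‖ * a ^ (-(s.re + K)) := fun x hx => by
    rw [norm_cpowDeriv (ha.trans_le hx.1),
      show 1 - s.re - ((K + 1 : ℕ) : ℝ) = -(s.re + K) by push_cast; ring]
    exact mul_le_mul_of_nonneg_left
      (Real.rpow_le_rpow_of_nonpos ha hx.1 (neg_nonpos.2 hre)) (norm_nonneg _)
  have h := norm_sum_bernoulli_smul_sub_le (g := fun k => cpowDeriv k s) hK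
    (fun k _ x hx => hasDerivAt_cpowDeriv (ha.trans_le hx.1)) hM hC
  refine (le_of_eq ?_).trans h
  rw [← norm_neg, cpowDeriv_one hs]
  simp only [zetaTail, smul_sub, Finset.sum_sub_distrib]
  congr 1
  ring

lemma exists_summable_bound_cpow_add_zetaTail_sub (hK : 1 ≤ K) {S : Set ℂ} (hS : IsCompact S)
    (hSre : S ⊆ {s : ℂ | 1 - (K : ℝ) < s.re} \ {1}) :
    ∃ u : ℕ → ℝ, Summable u ∧ ∀ m : ℕ, ∀ s ∈ S,
      ‖((m + 1 : ℝ) : ℂ) ^ (-s) + (zetaTail K (m + 1 + 1) s - zetaTail K (m + 1) s)‖ ≤ u m := by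
  rcases S.eq_empty_or_nonempty with rfl | hne
  · exact ⟨0, summable_zero, by simp⟩
  obtain ⟨s₀, hs₀, hmin⟩ := hS.exists_isMinOn hne Complex.continuous_re.continuousOn
  obtain ⟨M, hM⟩ := isCompact_Icc.exists_bound_of_continuousOn
    (continuous_bernoulliFun K).continuousOn (s := Set.Icc (0 : ℝ) 1)
  obtain ⟨B, hB⟩ := hS.exists_bound_of_continuousOn
    (f := fun s => (descPochhammer ℂ (K + 1)).eval (1 - s) / (1 - s)) (ContinuousOn.div
      (by fun_prop) (by fun_prop) fun s hs => sub_ne_zero.2 (Ne.symm (hSre hs).2))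
  have hexp : 1 < s₀.re + K := by linarith [(hSre hs₀).1.out]
  refine ⟨fun m => M / K ! * (B * (1 / |(m : ℝ) + 1| ^ (s₀.re + K))),
    (((Real.summable_one_div_nat_add_rpow 1 _).2 hexp).mul_left B).mul_left _, fun m s hs => ?_⟩
  have hre : s₀.re ≤ s.re := hmin hs
  have hM0 : 0 ≤ M := (norm_nonneg _).trans (hM 0 (by simp))
  refine (norm_cpow_add_zetaTail_sub_le hK (by positivity) (hSre hs).2 (by linarith) hM).trans ?_
  beta_reduce
  rw [one_div, abs_of_pos (by positivity), ← Real.rpow_neg (by positivity)]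
  have hpow : ((m : ℝ) + 1) ^ (-(s.re + K)) ≤ ((m : ℝ) + 1) ^ (-(s₀.re + K)) :=
    Real.rpow_le_rpow_of_exponent_le (by simp) (by linarith)
  gcongr
  · exact (norm_nonneg _).trans (hB s hs)
  · exact hB s hs

lemma zetaApprox_eq_zetaTail_add_sum (K N : ℕ) (s : ℂ) :
    zetaApprox K N s = zetaTail K 1 s + ∑ m ∈ Finset.range N, (((m + 1 : ℝ) : ℂ) ^ (-s)
      + (zetaTail K (m + 1 + 1) s - zetaTail K (m + 1) s)) := by
  have h := Finset.sum_range_sub (fun m : ℕ => zetaTail K (m + 1) s) N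
  simp only [Nat.cast_add, Nat.cast_one, Nat.cast_zero, zero_add] at h
  rw [Finset.sum_add_distrib, h, zetaApprox]
  ring

lemma differentiableAt_zetaApprox {N : ℕ} (hs : s ≠ 1) : DifferentiableAt ℂ (zetaApprox K N) s := by
  refine (DifferentiableAt.fun_sum fun m _ => ?_).add (differentiableAt_zetaTail (by positivity) hs)
  exact differentiableAt_id.neg.const_cpow (Or.inl (by exact_mod_cast m.succ_ne_zero))

lemma isOpen_re_gt_diff_one (σ : ℝ) : IsOpen ({s : ℂ | σ < s.re} \ {1}) :=
  (isOpen_lt continuous_const Complex.continuous_re).sdiff isClosed_singleton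

lemma exists_tendstoLocallyUniformlyOn_zetaApprox (hK : 1 ≤ K) :
    ∃ f : ℂ → ℂ, TendstoLocallyUniformlyOn (zetaApprox K) f atTop
      ({s : ℂ | 1 - (K : ℝ) < s.re} \ {1}) := by
  refine ⟨fun s => zetaTail K 1 s + ∑' m : ℕ, (((m + 1 : ℝ) : ℂ) ^ (-s)
    + (zetaTail K (m + 1 + 1) s - zetaTail K (m + 1) s)),
    (tendstoLocallyUniformlyOn_iff_forall_isCompact (isOpen_re_gt_diff_one _)).2
      fun S hSU hS => ?_⟩
  obtain ⟨u, hu, hbound⟩ := exists_summable_bound_cpow_add_zetaTail_sub hK hS hSU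
  have hconst : TendstoUniformlyOn (fun (_ : ℕ) s => zetaTail K 1 s) (zetaTail K 1) atTop S :=
    fun _ hv => Eventually.of_forall fun _ _ _ => refl_mem_uniformity hv
  refine (hconst.add (tendstoUniformlyOn_tsum_nat hu hbound)).congr
    (Eventually.of_forall fun N s _ => ?_)
  exact (zetaApprox_eq_zetaTail_add_sum K N s).symm

lemma tendsto_zetaApprox_of_one_lt_re (hs : 1 < s.re) :
    Tendsto (fun N => zetaApprox K N s) atTop (𝓝 (riemannZeta s)) := by
  have hsum : HasSum (fun m : ℕ => ((m + 1 : ℝ) : ℂ) ^ (-s)) (riemannZeta s) := by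
    have := (summable_nat_add_iff 1).2 (Complex.summable_one_div_nat_cpow.2 hs)
    rw [zeta_eq_tsum_one_div_nat_add_one_cpow hs]
    simpa [Complex.cpow_neg] using this.hasSum
  have htail := (tendsto_zetaTail_atTop (K := K) hs).comp
    (tendsto_atTop_add_const_right atTop 1 tendsto_natCast_atTop_atTop)
  simpa [zetaApprox] using hsum.tendsto_sum_nat.add htail

/- Cover the region by four overlapping convex sets. -/
lemma isPreconnected_re_gt_diff_singleton {σ : ℝ} {z : ℂ} (hz : σ < z.re) :
    IsPreconnected ({s : ℂ | σ < s.re} \ {z}) := by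
  have hH := convex_halfSpace_re_gt σ
  have hright := (convex_halfSpace_re_gt z.re).isPreconnected
  have habove := (hH.inter (convex_halfSpace_im_gt z.im)).isPreconnected
  have hbelow := (hH.inter (convex_halfSpace_im_lt z.im)).isPreconnected
  have hleft := (hH.inter (convex_halfSpace_re_lt z.re)).isPreconnected
  have hmid : σ < (σ + z.re) / 2 ∧ (σ + z.re) / 2 < z.re := ⟨by linarith, by linarith⟩
  have hz1 : σ < z.re + 1 := by linarith
  have hunion := ((hright.union (z + 1 + Complex.I) (by simp) (by simp [hz1]) habove).union
    (z + 1 - Complex.I) (by simp) (by simp [hz1]) hbelow).union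
    ⟨(σ + z.re) / 2, z.im + 1⟩ (by simp [hmid.1]) hmid hleft
  convert hunion using 1
  ext s
  simp only [Set.mem_sdiff, Set.mem_ofPred_eq, Set.mem_singleton_iff, Complex.ext_iff,
    Set.mem_union, Set.mem_inter_iff]
  grind

theorem tendstoLocallyUniformlyOn_zetaApprox (hK : 1 ≤ K) :
    TendstoLocallyUniformlyOn (zetaApprox K) riemannZeta atTop
      ({s : ℂ | 1 - (K : ℝ) < s.re} \ {1}) := by
  obtain ⟨f, hf⟩ := exists_tendstoLocallyUniformlyOn_zetaApprox hK
  have hK' : (1 : ℝ) ≤ K := by exact_mod_cast hK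
  have hre : 1 - (K : ℝ) < (1 : ℂ).re := by rw [Complex.one_re]; linarith
  have hU := isOpen_re_gt_diff_one (1 - (K : ℝ))
  have hfdiff := hf.differentiableOn (Eventually.of_forall fun N s hs =>
    (differentiableAt_zetaApprox hs.2).differentiableWithinAt) hU
  have hζdiff : DifferentiableOn ℂ riemannZeta ({s : ℂ | 1 - (K : ℝ) < s.re} \ {1}) :=
    fun s hs => (differentiableAt_riemannZeta hs.2).differentiableWithinAt
  have h2 : (2 : ℂ) ∈ {s : ℂ | 1 - (K : ℝ) < s.re} \ {1} := 
    ⟨by rw [Set.mem_ofPred_eq, Complex.re_ofNat]; linarith, by simp⟩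
  have heq : ∀ᶠ s : ℂ in 𝓝 2, f s = riemannZeta s := by
    filter_upwards [hU.mem_nhds h2, (isOpen_lt continuous_const Complex.continuous_re).mem_nhds
      (show (1 : ℝ) < (2 : ℂ).re by simp)] with s hsU hs
    exact tendsto_nhds_unique (hf.tendsto_at hsU) (tendsto_zetaApprox_of_one_lt_re hs)
  exact hf.congr_right ((hfdiff.analyticOnNhd hU).eqOn_of_preconnected_of_eventuallyEq
    (hζdiff.analyticOnNhd hU) (isPreconnected_re_gt_diff_singleton hre) h2 heq)

lemma deriv_zetaApprox {N : ℕ} (hs : s ≠ 1) :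
    deriv (zetaApprox K N) s
      = -∑ m ∈ Finset.range N, ((m + 1 : ℝ) : ℂ) ^ (-s) * (Real.log (m + 1) : ℂ)
        + deriv (zetaTail K (N + 1)) s := by
  have hpow : ∀ m : ℕ, HasDerivAt (fun s => ((m + 1 : ℝ) : ℂ) ^ (-s))
      (-(((m + 1 : ℝ) : ℂ) ^ (-s) * (Real.log (m + 1) : ℂ))) s := fun m => by
    refine ((hasDerivAt_id s).neg.const_cpow
      (Or.inl (by exact_mod_cast m.succ_ne_zero))).congr_deriv ?_
    rw [Complex.ofReal_log (by positivity)]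
    simp
  rw [← Finset.sum_neg_distrib]
  exact ((HasDerivAt.fun_sum fun m _ => hpow m).add
    (differentiableAt_zetaTail (by positivity) hs).hasDerivAt).deriv

theorem tendsto_deriv_riemannZeta (hK : 1 ≤ K) (hre : 1 - (K : ℝ) < s.re) (hs : s ≠ 1) :
    Tendsto (fun N : ℕ =>
      -∑ m ∈ Finset.range N, ((m + 1 : ℝ) : ℂ) ^ (-s) * (Real.log (m + 1) : ℂ)
        + deriv (zetaTail K (N + 1)) s) atTop (𝓝 (deriv riemannZeta s)) := by
  have h := ((tendstoLocallyUniformlyOn_zetaApprox hK).deriv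
    (Eventually.of_forall fun N s hs => (differentiableAt_zetaApprox hs.2).differentiableWithinAt)
    (isOpen_re_gt_diff_one _)).tendsto_at ⟨hre, hs⟩
  exact h.congr fun N => deriv_zetaApprox hs

end Zeta

section DerivZeta

/-- The logarithm of the generalized hyperfactorial `∏_{m=1}^N m ^ (m ^ q)`. -/
noncomputable def logHyperfactorial (q N : ℕ) : ℝ :=
  ∑ m ∈ Finset.range N, ((m : ℝ) + 1) ^ q * Real.log (m + 1)

lemma tendsto_deriv_riemannZeta_neg_nat {K q : ℕ} (hq : q + 1 < K) :
    Tendsto (fun N : ℕ => -logHyperfactorial q N + (deriv (zetaTail K (N + 1)) (-q)).re) atTop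
      (𝓝 (deriv riemannZeta (-q)).re) := by
  have hq' : (q : ℝ) + 1 < K := by exact_mod_cast hq
  have hre : 1 - (K : ℝ) < (-q : ℂ).re := by
    rw [Complex.neg_re, Complex.natCast_re]
    linarith
  have hs : (-q : ℂ) ≠ 1 := fun h => by
    have := congrArg Complex.re h
    rw [Complex.neg_re, Complex.natCast_re, Complex.one_re] at this
    linarith [q.cast_nonneg (α := ℝ)]
  refine ((Complex.continuous_re.tendsto _).comp
    (tendsto_deriv_riemannZeta (by omega) hre hs)).congr fun N => ?_
  simp only [Function.comp_apply, neg_neg, Complex.cpow_natCast, Complex.add_re, Complex.neg_re,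
    logHyperfactorial]
  norm_cast

variable {x : ℝ} {s : ℂ}

lemma zetaTail_five (hs : s ≠ 1) :
    zetaTail 5 x s = (x : ℂ) ^ (1 - s) / (s - 1) + (x : ℂ) ^ (-s) / 2 + s * (x : ℂ) ^ (-s - 1) / 12
      - s * (s + 1) * (s + 2) * (x : ℂ) ^ (-s - 3) / 720 := by
  have hs' : 1 - s ≠ 0 := sub_ne_zero.2 hs.symm
  have hs'' : s - 1 ≠ 0 := sub_ne_zero.2 hs
  have h1 : 1 - s - 1 = -s := by ring
  have h2 : 1 - s - 2 = -s - 1 := by ring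
  have h4 : 1 - s - 4 = -s - 3 := by ring
  have hB3 : bernoulli 3 = 0 := bernoulli_eq_zero_of_odd (by decide) (by norm_num)
  have hB4 : bernoulli 4 = -1 / 30 := by
    rw [bernoulli_eq_bernoulli'_of_ne_one (by norm_num), bernoulli'_four]
  have hB5 : bernoulli 5 = 0 := bernoulli_eq_zero_of_odd (by decide) (by norm_num)
  simp only [zetaTail, cpowDeriv, Finset.sum_range_succ, Finset.sum_range_zero, bernoulli_zero,
    bernoulli_one, bernoulli_two, hB3, hB4, hB5, descPochhammer_succ_eval, descPochhammer_zero,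
    Polynomial.eval_one, Nat.factorial, Complex.real_smul]
  push_cast
  simp only [sub_zero, h1, h2, h4]
  field_simp
  ring

lemma hasDerivAt_zetaTail_five (hx : 0 < x) (hs : s ≠ 1) :
    HasDerivAt (zetaTail 5 x)
      (-(x : ℂ) ^ (1 - s) * (Real.log x / (s - 1) + 1 / (s - 1) ^ 2)
        - Real.log x * (x : ℂ) ^ (-s) / 2
        + (1 - s * Real.log x) * (x : ℂ) ^ (-s - 1) / 12
        - (3 * s ^ 2 + 6 * s + 2 - s * (s + 1) * (s + 2) * Real.log x)
          * (x : ℂ) ^ (-s - 3) / 720) s := by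
  have hs' : s - 1 ≠ 0 := sub_ne_zero.2 hs
  have hid := hasDerivAt_id s
  have hpow : ∀ {f : ℂ → ℂ}, HasDerivAt f (-1) s →
      HasDerivAt (fun s => (x : ℂ) ^ f s) ((x : ℂ) ^ f s * Real.log x * (-1)) s := fun hf => by
    simpa [Complex.ofReal_log hx.le]
      using hf.const_cpow (c := (x : ℂ)) (Or.inl (by exact_mod_cast hx.ne'))
  have hsum := ((((hpow (hid.const_sub 1)).div (hid.sub_const 1) hs').add
    ((hpow hid.neg).div_const 2)).add ((hid.mul (hpow (hid.neg.sub_const 1))).div_const 12)).sub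
    ((((hid.mul (hid.add_const 1)).mul (hid.add_const 2)).mul
      (hpow (hid.neg.sub_const 3))).div_const 720)
  refine (hsum.congr_deriv ?_).congr_of_eventuallyEq ?_
  · simp only [id, Pi.mul_apply, Pi.neg_apply]
    field_simp
    ring
  · filter_upwards [isOpen_ne.mem_nhds hs] with s hs
    simpa using zetaTail_five hs

lemma deriv_zetaTail_five_neg_one (hx : 0 < x) :
    deriv (zetaTail 5 x) (-1) = ((x ^ 2 * (Real.log x / 2 - 1 / 4) - x * Real.log x / 2
      + (1 + Real.log x) / 12 + x⁻¹ ^ 2 / 720 : ℝ) : ℂ) := by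
  rw [(hasDerivAt_zetaTail_five hx (by norm_num)).deriv, show (1 - -1 : ℂ) = (2 : ℕ) by norm_num,
    show (-(-1) - 1 : ℂ) = (0 : ℕ) by norm_num, show (-(-1) - 3 : ℂ) = -(2 : ℕ) by norm_num,
    neg_neg, Complex.cpow_neg]
  simp only [Complex.cpow_natCast, Complex.cpow_one]
  push_cast
  ring

lemma deriv_zetaTail_five_neg_three (hx : 0 < x) :
    deriv (zetaTail 5 x) (-3) = ((x ^ 4 * (Real.log x / 4 - 1 / 16) - x ^ 3 * Real.log x / 2
      + (1 + 3 * Real.log x) * x ^ 2 / 12 - (11 + 6 * Real.log x) / 720 : ℝ) : ℂ) := by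
  rw [(hasDerivAt_zetaTail_five hx (by norm_num)).deriv, show (1 - -3 : ℂ) = (4 : ℕ) by norm_num,
    show (-(-3) - 1 : ℂ) = (2 : ℕ) by norm_num, show (-(-3) - 3 : ℂ) = (0 : ℕ) by norm_num,
    show (-(-3) : ℂ) = (3 : ℕ) by norm_num]
  simp only [Complex.cpow_natCast]
  push_cast
  ring

lemma tendsto_logHyperfactorial_one :
    Tendsto (fun N : ℕ => -logHyperfactorial 1 N
      + (((N : ℝ) + 1) ^ 2 * (Real.log (N + 1) / 2 - 1 / 4) - (N + 1) * Real.log (N + 1) / 2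
        + (1 + Real.log (N + 1)) / 12 + ((N : ℝ) + 1)⁻¹ ^ 2 / 720))
      atTop (𝓝 (deriv riemannZeta (-1)).re) := by
  have h := tendsto_deriv_riemannZeta_neg_nat (K := 5) (q := 1) (by norm_num)
  rw [Nat.cast_one] at h
  refine h.congr fun N => ?_
  rw [deriv_zetaTail_five_neg_one (by positivity), Complex.ofReal_re]

lemma tendsto_logHyperfactorial_three :
    Tendsto (fun N : ℕ => -logHyperfactorial 3 N
      + (((N : ℝ) + 1) ^ 4 * (Real.log (N + 1) / 4 - 1 / 16) - (N + 1) ^ 3 * Real.log (N + 1) / 2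
        + (1 + 3 * Real.log (N + 1)) * (N + 1) ^ 2 / 12 - (11 + 6 * Real.log (N + 1)) / 720))
      atTop (𝓝 (deriv riemannZeta (-3)).re) := by
  have h := tendsto_deriv_riemannZeta_neg_nat (K := 5) (q := 3) (by norm_num)
  rw [Nat.cast_ofNat] at h
  refine h.congr fun N => ?_
  rw [deriv_zetaTail_five_neg_three (by positivity), Complex.ofReal_re]

end DerivZeta

section ZetaSeries

lemma hasSum_one_div_nat_add_one_pow {k : ℕ} (hk : 1 < k) :
    HasSum (fun m : ℕ => 1 / ((m : ℝ) + 1) ^ k) (riemannZeta k).re := by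
  have hs : Summable fun m : ℕ => 1 / ((m : ℝ) + 1) ^ k := by
    simpa using (summable_nat_add_iff 1).2 (Real.summable_one_div_nat_pow.2 hk)
  have hζ : riemannZeta k = ((∑' m : ℕ, 1 / ((m : ℝ) + 1) ^ k : ℝ) : ℂ) := by
    rw [zeta_eq_tsum_one_div_nat_add_one_cpow (by simpa using hk)]
    push_cast [Complex.ofReal_tsum, Complex.cpow_natCast]
    rfl
  rw [hζ, Complex.ofReal_re]
  exact hs.hasSum

lemma hasSum_mul_riemannZeta_natCast {ι : Type*} {a : ι → ℝ} {k : ι → ℕ} {S : ℕ → ℝ} {T : ℝ}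
    (ha : ∀ i, 0 ≤ a i) (hk : ∀ i, 1 < k i)
    (hS : ∀ m : ℕ, HasSum (fun i => a i * (1 / ((m : ℝ) + 1) ^ k i)) (S m)) (hT : HasSum S T) :
    HasSum (fun i => a i * (riemannZeta (k i)).re) T := by
  let f : ℕ × ι → ℝ := fun p => a p.2 * (1 / ((p.1 : ℝ) + 1) ^ k p.2)
  have hf : Summable f :=
    (summable_prod_of_nonneg fun p => mul_nonneg (ha p.2) (by positivity)).2
      ⟨fun m => (hS m).summable, hT.summable.congr fun m => (hS m).tsum_eq.symm⟩
  have hfT : HasSum f T := (hf.hasSum.prod_fiberwise hS).unique hT ▸ hf.hasSum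
  exact ((Equiv.prodComm ι ℕ).hasSum_iff.2 hfT).prod_fiberwise fun i =>
    (hasSum_one_div_nat_add_one_pow (hk i)).mul_left (a i)

end ZetaSeries

section InversePowerSeries

variable {x : ℝ}

/-- The sum of the series `∑ 1 / ((n + 2) (2 n + 7) x ^ (2 n + 3))` over `n ≥ 0`, for `1 ≤ x`. At
`x = 1` the last logarithm is Mathlib's `log 0 = 0`, which gives the correct limit because its
coefficient `x ^ 4 - x` vanishes there. -/
noncomputable def invPowSeriesSum (x : ℝ) : ℝ :=
  (2 * x * Real.log x - (x + x ^ 4) * Real.log (x + 1) + (x ^ 4 - x) * Real.log (x - 1)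
    + 2 * x ^ 3 + 2 * x / 3 - 3 / (5 * x)) / 3

lemma hasSum_pow_div_add_two (hx : |x| < 1) :
    HasSum (fun n : ℕ => x ^ (2 * n + 4) / ((n : ℝ) + 2)) (-Real.log (1 - x ^ 2) - x ^ 2) := by
  have hx2 : |x ^ 2| < 1 := by simpa using pow_lt_one₀ (abs_nonneg x) hx two_ne_zero
  refine (((hasSum_nat_add_iff' 1).2 (Real.hasSum_pow_div_log_of_abs_lt_one hx2)).congr_fun
    fun n => ?_).trans_eq (congrArg 𝓝 ?_)
  · rw [← pow_mul]
    push_cast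
    ring_nf
  · simp

lemma hasSum_two_mul_pow_div_two_mul_add_seven (hx : |x| < 1) :
    HasSum (fun n : ℕ => 2 * x ^ (2 * n + 7) / (2 * (n : ℝ) + 7))
      (Real.log (1 + x) - Real.log (1 - x) - (2 * x + 2 * x ^ 3 / 3 + 2 * x ^ 5 / 5)) := by
  refine (((hasSum_nat_add_iff' 3).2 (Real.hasSum_log_sub_log_of_abs_lt_one hx)).congr_fun
    fun n => ?_).trans_eq (congrArg 𝓝 ?_)
  · push_cast
    ring_nf
  · simp only [Finset.sum_range_succ, Finset.sum_range_zero]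
    push_cast
    ring

lemma log_one_sub_inv (hx : 1 < x) : Real.log (1 - x⁻¹) = Real.log (x - 1) - Real.log x := by
  rw [← Real.log_div (by linarith) (by linarith)]
  congr 1
  field_simp

lemma log_one_add_inv (hx : 0 < x) : Real.log (1 + x⁻¹) = Real.log (x + 1) - Real.log x := by
  rw [← Real.log_div (by linarith) hx.ne']
  congr 1
  field_simp

lemma hasSum_invPowSeriesSum_of_one_lt (hx : 1 < x) :
    HasSum (fun n : ℕ => 1 / (((n : ℝ) + 2) * (2 * n + 7)) * (1 / x ^ (2 * n + 3)))
      (invPowSeriesSum x) := by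
  have hx0 : 0 < x := by linarith
  have hy : |x⁻¹| < 1 := by
    rw [abs_of_pos (inv_pos.2 hx0)]
    exact inv_lt_one_of_one_lt₀ hx
  have hlog : Real.log (1 - x⁻¹ ^ 2) = Real.log (1 - x⁻¹) + Real.log (1 + x⁻¹) := by
    have hy' := abs_lt.1 hy
    rw [← Real.log_mul (by linarith) (by linarith)]
    ring_nf
  -- `3 / ((n + 2) (2 n + 7)) = 1 / (n + 2) - 2 / (2 n + 7)`
  refine (((((hasSum_pow_div_add_two hy).mul_left x).sub
    ((hasSum_two_mul_pow_div_two_mul_add_seven hy).mul_left (x ^ 4))).div_const 3).congr_fun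
    fun n => ?_).trans_eq (congrArg 𝓝 ?_)
  · have hn2 : (n : ℝ) + 2 ≠ 0 := by positivity
    simp only [inv_pow, pow_add]
    field_simp
    ring
  · rw [invPowSeriesSum, hlog, log_one_sub_inv hx, log_one_add_inv hx0]
    field_simp
    ring

lemma summable_one_div_add_two_mul_two_mul_add_seven :
    Summable fun n : ℕ => 1 / (((n : ℝ) + 2) * (2 * n + 7)) := by
  refine Summable.of_nonneg_of_le (fun n => by positivity) (fun n => ?_)
    ((summable_nat_add_iff 1).2 (Real.summable_one_div_nat_pow.2 one_lt_two))
  push_cast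
  gcongr
  nlinarith [n.cast_nonneg (α := ℝ)]

lemma norm_mul_one_div_pow_le {c : ℝ} (hc : 0 ≤ c) (hx : 1 ≤ x) (k : ℕ) :
    ‖c * (1 / x ^ k)‖ ≤ c := by
  have hpow : 0 ≤ 1 / x ^ k := one_div_nonneg.2 (pow_nonneg (by linarith) k)
  rw [Real.norm_of_nonneg (mul_nonneg hc hpow)]
  exact mul_le_of_le_one_right hc (by simpa using inv_le_one_of_one_le₀ (one_le_pow₀ (n := k) hx))

lemma continuousOn_invPowSeriesSum : ContinuousOn invPowSeriesSum (Set.Ici 1) := by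
  have hfactor : invPowSeriesSum = fun x =>
      (2 * (x * Real.log x) - (x + x ^ 4) * Real.log (x + 1)
        + x * (x ^ 2 + x + 1) * ((x - 1) * Real.log (x - 1))
        + 2 * x ^ 3 + 2 * x / 3 - 3 / (5 * x)) / 3 := by
    funext x
    rw [invPowSeriesSum]
    ring
  rw [hfactor]
  intro x hx
  have hx0 : 0 < x := zero_lt_one.trans_le hx
  have hadd : ContinuousAt (fun x : ℝ => Real.log (x + 1)) x :=
    (continuousAt_id.add_const 1).log (by positivity)
  have hdiv : ContinuousAt (fun x : ℝ => 3 / (5 * x)) x :=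
    continuousAt_const.div (by fun_prop) (by positivity)
  refine ContinuousAt.continuousWithinAt ?_
  fun_prop

theorem hasSum_invPowSeriesSum (hx : 1 ≤ x) :
    HasSum (fun n : ℕ => 1 / (((n : ℝ) + 2) * (2 * n + 7)) * (1 / x ^ (2 * n + 3)))
      (invPowSeriesSum x) := by
  have hcont : ContinuousOn
      (fun x : ℝ => ∑' n : ℕ, 1 / (((n : ℝ) + 2) * (2 * n + 7)) * (1 / x ^ (2 * n + 3)))
      (Set.Ici 1) := by
    refine continuousOn_tsum (fun n y hy => ?_) summable_one_div_add_two_mul_two_mul_add_seven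
      fun n y hy => norm_mul_one_div_pow_le (by positivity) hy _
    have hy0 : y ≠ 0 := (zero_lt_one.trans_le hy).ne'
    exact ContinuousAt.continuousWithinAt (by fun_prop (disch := positivity))
  -- Abel's argument: both sides are continuous on `[1, ∞)` and agree on `(1, ∞)`.
  have heq := Set.EqOn.of_subset_closure
    (fun y hy => (hasSum_invPowSeriesSum_of_one_lt hy).tsum_eq) hcont continuousOn_invPowSeriesSum
    Set.Ioi_subset_Ici_self (closure_Ioi (1 : ℝ)).ge
  rw [← show _ = invPowSeriesSum x from heq hx]
  exact (summable_one_div_add_two_mul_two_mul_add_seven.of_norm_bounded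
    fun n => norm_mul_one_div_pow_le (by positivity) hx _).hasSum

end InversePowerSeries

section Summation

lemma sum_invPowSeriesSum (N : ℕ) :
    ∑ m ∈ Finset.range N, invPowSeriesSum (m + 1)
      = (8 * logHyperfactorial 3 N + 8 * logHyperfactorial 1 N
        - (((N : ℝ) + 1) ^ 4 - (N + 1)) * Real.log N - (N + (N : ℝ) ^ 4) * Real.log (N + 1)
        + (N : ℝ) ^ 2 * (N + 1) ^ 2 / 2 + N * (N + 1) / 3 - 3 / 5 * (harmonic N : ℝ)) / 3 := by
  induction N with
  | zero => simp [logHyperfactorial]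
  | succ N ih =>
    rw [Finset.sum_range_succ, ih, harmonic_succ]
    simp only [logHyperfactorial, Finset.sum_range_succ, invPowSeriesSum, add_sub_cancel_right]
    push_cast
    field_simp
    ring

lemma tendsto_pow_mul_sum_add_log_one_sub_inv (n : ℕ) :
    Tendsto (fun x : ℝ =>
      x ^ n * (∑ i ∈ Finset.range n, x⁻¹ ^ (i + 1) / ((i : ℝ) + 1) + Real.log (1 - x⁻¹)))
      atTop (𝓝 0) := by
  refine squeeze_zero_norm' ?_ (a := fun x => 2 * x⁻¹)
    (by simpa using tendsto_inv_atTop_zero.const_mul (2 : ℝ))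
  filter_upwards [eventually_ge_atTop 2] with x hx
  have hx0 : 0 < x := by linarith
  have hy : x⁻¹ ≤ 2⁻¹ := inv_anti₀ (by norm_num) hx
  have hbound := Real.abs_log_sub_add_sum_range_le (x := x⁻¹)
    (by rw [abs_of_pos (by positivity)]; linarith) n
  rw [abs_of_pos (inv_pos.2 hx0)] at hbound
  rw [norm_mul, Real.norm_of_nonneg (by positivity : 0 ≤ x ^ n), Real.norm_eq_abs]
  calc x ^ n * |∑ i ∈ Finset.range n, x⁻¹ ^ (i + 1) / ((i : ℝ) + 1) + Real.log (1 - x⁻¹)|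
      ≤ x ^ n * (x⁻¹ ^ (n + 1) / (1 - x⁻¹)) := by gcongr
    _ ≤ x ^ n * (x⁻¹ ^ (n + 1) / 2⁻¹) := by gcongr; linarith
    _ = 2 * x⁻¹ := by rw [inv_pow, pow_succ]; field_simp

lemma tendsto_pow_four_sub_mul_log_one_sub_inv :
    Tendsto (fun x : ℝ => (x ^ 4 - x) * Real.log (1 - x⁻¹) + x ^ 3 + x ^ 2 / 2 + x / 3)
      atTop (𝓝 (3 / 4)) := by
  have h := ((tendsto_pow_mul_sum_add_log_one_sub_inv 4).sub
    (tendsto_pow_mul_sum_add_log_one_sub_inv 1)).add_const (3 / 4)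
  rw [sub_zero, zero_add] at h
  refine h.congr' ?_
  filter_upwards [eventually_gt_atTop 0] with x hx
  simp only [Finset.sum_range_succ, Finset.sum_range_zero]
  push_cast
  field_simp
  ring

theorem hasSum_invPowSeriesSum_nat :
    HasSum (fun m : ℕ => invPowSeriesSum (m + 1))
      ((-8 * (deriv riemannZeta (-3)).re - 8 * (deriv riemannZeta (-1)).re
        - 3 / 5 * Real.eulerMascheroniConstant - 37 / 180) / 3) := by
  rw [hasSum_iff_tendsto_nat_of_nonneg fun m => (hasSum_invPowSeriesSum
    (le_add_of_nonneg_left m.cast_nonneg)).nonneg fun n => by positivity]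
  simp_rw [sum_invPowSeriesSum]
  have hN : Tendsto (fun N : ℕ => (N : ℝ) + 1) atTop atTop :=
    tendsto_atTop_add_const_right _ _ tendsto_natCast_atTop_atTop
  have hinv : Tendsto (fun N : ℕ => ((N : ℝ) + 1)⁻¹) atTop (𝓝 0) := tendsto_inv_atTop_zero.comp hN
  have hharm := Real.tendsto_harmonic_sub_log.comp (tendsto_add_atTop_nat 1)
  have hsum := ((((((tendsto_logHyperfactorial_three.const_mul (-8)).sub
    (tendsto_logHyperfactorial_one.const_mul 8)).sub (hharm.const_mul (3 / 5))).sub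
    (tendsto_pow_four_sub_mul_log_one_sub_inv.comp hN)).add (hinv.const_mul (3 / 5))).add
    ((hinv.pow 2).div_const 90)).add_const (49 / 90)
  refine ((hsum.div_const 3).congr' ?_).trans_eq (by ring_nf)
  filter_upwards [eventually_gt_atTop 0] with N hN0
  have hN1 : (1 : ℝ) < N + 1 := by simpa using hN0
  simp only [Function.comp_apply, log_one_sub_inv hN1, add_sub_cancel_right, harmonic_succ]
  push_cast
  field_simp
  ring

end Summation

/-- The series `∑_{n=1}^∞ ζ(2n+1)/((n+1)(2n+5))` converges and equals
`(1/540)·(1440·log A − 1440·ζ′(−3) − 108·γ − 157)`, where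
`A = exp(1/12 − ζ′(−1))` is the Glaisher–Kinkelin constant and `γ` is the
Euler–Mascheroni constant. -/
theorem hasSum_zeta_odd_div :
    HasSum (fun n : ℕ => (riemannZeta (2 * (n + 1) + 1)).re
        / (((n : ℝ) + 1 + 1) * (2 * ((n : ℝ) + 1) + 5)))
      ((1 / 540) * (1440 * Real.log (Real.exp (1 / 12 - (deriv riemannZeta (-1)).re))
        - 1440 * (deriv riemannZeta (-3)).re
        - 108 * Real.eulerMascheroniConstant - 157)) := by
  have h := hasSum_mul_riemannZeta_natCast (fun n => by positivity) (fun n => by omega)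
    (fun m => hasSum_invPowSeriesSum (le_add_of_nonneg_left m.cast_nonneg))
    hasSum_invPowSeriesSum_nat
  rw [Real.log_exp]
  convert h using 2 with n
  · rw [show ((2 * n + 3 : ℕ) : ℂ) = 2 * (n + 1) + 1 by push_cast; ring]
    ring
  · ring
end
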